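/- Let x̄ be a local minimizer of (P) and fix d ∈ Ĉ(x̄) ∩ 𝕊. If x̄ is AM-regular in direction d, then x̄ is M-stationary; if x̄ is strongly AM-regular in direction d, then x̄ is M-stationary in direction d. -/

import Mathlib

open Filter Topology Metric Set
open scoped RealInnerProductSpace Pointwise

noncomputable section

/-- Euclidean space `ℝ^n`. -/
abbrev Eu (n : ℕ) := EuclideanSpace ℝ (Fin n)

section Cones

variable {H : Type*} [NormedAddCommGroup H] [InnerProductSpace ℝ H]

/-- Tangent (Bouligand) cone to `Ω` at `x` (empty if `x ∉ Ω`). -/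
def tanCone (Ω : Set H) (x : H) : Set H :=
  {d | x ∈ Ω ∧ ∃ (dk : ℕ → H) (tk : ℕ → ℝ),
    Tendsto dk atTop (𝓝 d) ∧ (∀ k, 0 < tk k) ∧ Tendsto tk atTop (𝓝 0) ∧
    ∀ k, x + tk k • dk k ∈ Ω}

/-- Polar cone of a set. -/
def polarCone (C : Set H) : Set H := {y | ∀ x ∈ C, ⟪x, y⟫ ≤ 0}

/-- Regular (Fréchet) normal cone: polar of the tangent cone (empty if `x ∉ Ω`). -/
def regNormal (Ω : Set H) (x : H) : Set H :=
  {η | x ∈ Ω ∧ η ∈ polarCone (tanCone Ω x)}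

/-- Limiting (Mordukhovich) normal cone (empty if `x ∉ Ω`). -/
def limNormal (Ω : Set H) (x : H) : Set H :=
  {η | x ∈ Ω ∧ ∃ (xk ηk : ℕ → H),
    Tendsto xk atTop (𝓝 x) ∧ Tendsto ηk atTop (𝓝 η) ∧
    ∀ k, ηk k ∈ regNormal Ω (xk k)}

/-- Directional limiting normal cone to `Ω` at `x` in direction `d`. -/
def dirLimNormal (Ω : Set H) (x d : H) : Set H :=
  {η | x ∈ Ω ∧ ∃ (dk : ℕ → H) (tk : ℕ → ℝ) (ηk : ℕ → H),
    Tendsto dk atTop (𝓝 d) ∧ (∀ k, 0 < tk k) ∧ Tendsto tk atTop (𝓝 0) ∧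
    Tendsto ηk atTop (𝓝 η) ∧
    ∀ k, ηk k ∈ regNormal Ω (x + tk k • dk k)}

/-- The pair `(ξ, r)` as an element of the ℓ²-product `H ×₂ ℝ`. -/
def pl2 (ξ : H) (r : ℝ) : WithLp 2 (H × ℝ) := (WithLp.equiv 2 (H × ℝ)).symm (ξ, r)

/-- Epigraph of `φ` as a subset of the ℓ²-product `H ×₂ ℝ`. -/
def epigraphSet (φ : H → ℝ) : Set (WithLp 2 (H × ℝ)) :=
  {p | φ ((WithLp.equiv 2 (H × ℝ)) p).1 ≤ ((WithLp.equiv 2 (H × ℝ)) p).2}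

/-- Limiting subdifferential of `φ` at `x`. -/
def limSubdiff (φ : H → ℝ) (x : H) : Set H :=
  {ξ | pl2 ξ (-1) ∈ limNormal (epigraphSet φ) (pl2 x (φ x))}

/-- Directional limiting subdifferential of `φ` at `x` in direction `d`, where `φd`
denotes the directional derivative `φ'(x; d)`. -/
def dirLimSubdiff (φ : H → ℝ) (x d : H) (φd : ℝ) : Set H :=
  {ξ | pl2 ξ (-1) ∈ dirLimNormal (epigraphSet φ) (pl2 x (φ x)) (pl2 d φd)}

/-- Directional neighborhood `B_{ε,δ}(d)`. -/
def dirNbhd (d : H) (ε δ : ℝ) : Set H :=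
  {y | ‖y‖ ≤ ε ∧ ‖‖d‖ • y - ‖y‖ • d‖ ≤ δ * (‖y‖ * ‖d‖)}

end Cones

section Problem

variable {n l : ℕ}

/-- `F' x d` is the directional derivative of `F` at `x` in direction `d`. -/
def IsDirDeriv (F : Eu n → Eu l) (F' : Eu n → Eu n → Eu l) : Prop :=
  ∀ x d : Eu n,
    Tendsto (fun t : ℝ => t⁻¹ • (F (x + t • d) - F x)) (𝓝[>] (0:ℝ)) (𝓝 (F' x d))

/-- Limiting subdifferential of the scalarization `⟨λ, F⟩` at `x`. -/
def scalSubdiff (F : Eu n → Eu l) (lam : Eu l) (x : Eu n) : Set (Eu n) :=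
  limSubdiff (fun y => ⟪lam, F y⟫) x

/-- Directional limiting subdifferential of `⟨λ, F⟩` at `x` in direction `d`. -/
def scalDirSubdiff (F : Eu n → Eu l) (F' : Eu n → Eu n → Eu l) (lam : Eu l)
    (x d : Eu n) : Set (Eu n) :=
  dirLimSubdiff (fun y => ⟪lam, F y⟫) x d ⟪lam, F' x d⟫

/-- Linearization cone. -/
def linCone (F : Eu n → Eu l) (F' : Eu n → Eu n → Eu l) (Γ : Set (Eu l)) (x : Eu n) :
    Set (Eu n) :=
  {d | F' x d ∈ tanCone Γ (F x)}

/-- Explicit critical cone `C(x̄)`. -/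
def critCone (f : Eu n → ℝ) (F : Eu n → Eu l) (F' : Eu n → Eu n → Eu l)
    (Γ : Set (Eu l)) (x : Eu n) : Set (Eu n) :=
  {d | ⟪gradient f x, d⟫ ≤ 0 ∧ d ∈ linCone F F' Γ x}

/-- Implicit critical cone `Ĉ(x̄)`. -/
def implCritCone (f : Eu n → ℝ) (F : Eu n → Eu l) (Γ : Set (Eu l)) (x : Eu n) :
    Set (Eu n) :=
  {d | ⟪gradient f x, d⟫ ≤ 0 ∧ d ∈ tanCone (F ⁻¹' Γ) x}

/-- M-stationarity. -/
def MStat (f : Eu n → ℝ) (F : Eu n → Eu l) (Γ : Set (Eu l)) (x : Eu n) : Prop :=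
  ∃ lam : Eu l, -gradient f x ∈ scalSubdiff F lam x ∧ lam ∈ limNormal Γ (F x)

/-- M-stationarity in direction `d`. -/
def MStatDir (f : Eu n → ℝ) (F : Eu n → Eu l) (F' : Eu n → Eu n → Eu l)
    (Γ : Set (Eu l)) (x d : Eu n) : Prop :=
  ∃ lam : Eu l, -gradient f x ∈ scalDirSubdiff F F' lam x d ∧
    lam ∈ dirLimNormal Γ (F x) (F' x d)

/-- Metric subregularity constraint qualification in direction `d`. -/
def MSCQdir (F : Eu n → Eu l) (Γ : Set (Eu l)) (x d : Eu n) : Prop :=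
  ∃ ε > (0:ℝ), ∃ δ > (0:ℝ), ∃ κ > (0:ℝ), ∀ y : Eu n, y - x ∈ dirNbhd d ε δ →
    infDist y (F ⁻¹' Γ) ≤ κ * infDist (F y) Γ

/-- Metric subregularity constraint qualification. -/
def MSCQ (F : Eu n → Eu l) (Γ : Set (Eu l)) (x : Eu n) : Prop := MSCQdir F Γ x 0

/-- AM-stationary sequence w.r.t. `x`. -/
def AMSeq (f : Eu n → ℝ) (F : Eu n → Eu l) (Γ : Set (Eu l)) (x : Eu n)
    (xk : ℕ → Eu n) (lamk δk : ℕ → Eu l) (εk : ℕ → Eu n) : Prop :=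
  (∀ k, εk k - gradient f (xk k) ∈ scalSubdiff F (lamk k) (xk k)) ∧
  (∀ k, lamk k ∈ limNormal Γ (F (xk k) - δk k)) ∧
  Tendsto xk atTop (𝓝 x) ∧ Tendsto δk atTop (𝓝 0) ∧ Tendsto εk atTop (𝓝 0)

/-- AM-stationarity. -/
def AMStat (f : Eu n → ℝ) (F : Eu n → Eu l) (Γ : Set (Eu l)) (x : Eu n) : Prop :=
  ∃ xk lamk δk εk, AMSeq f F Γ x xk lamk δk εk

/-- AM-stationary sequence w.r.t. `x` in direction `d`. -/
def AMSeqDir (f : Eu n → ℝ) (F : Eu n → Eu l) (Γ : Set (Eu l)) (x : Eu n)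
    (xk : ℕ → Eu n) (lamk δk : ℕ → Eu l) (εk : ℕ → Eu n) (d : Eu n) : Prop :=
  AMSeq f F Γ x xk lamk δk εk ∧
  (∀ k, xk k ≠ x) ∧
  Tendsto (fun k => ‖xk k - x‖⁻¹ • (xk k - x)) atTop (𝓝 d) ∧
  Tendsto (fun k => ‖xk k - x‖⁻¹ • δk k) atTop (𝓝 (0 : Eu l)) ∧
  (∃ θ : ℕ → ℝ, (∀ k, 0 ≤ θ k) ∧ Tendsto θ atTop (𝓝 0) ∧
    ∀ k, ‖‖δk k‖ • lamk k - ‖lamk k‖ • δk k‖ ≤ ‖δk k‖ * ‖lamk k‖ * θ k) ∧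
  (∃ M : ℝ, ∀ k, ‖δk k‖ * ‖lamk k‖ / ‖xk k - x‖ ≤ M)

/-- AM-stationarity in direction `d`. -/
def AMStatDir (f : Eu n → ℝ) (F : Eu n → Eu l) (Γ : Set (Eu l)) (x d : Eu n) : Prop :=
  ∃ xk lamk δk εk, AMSeqDir f F Γ x xk lamk δk εk d

/-- The Minkowski sum `Σ_i |λ_i| ∂(sgn(λ_i) F_i)(x; d)`. -/
def dirSumSet (F : Eu n → Eu l) (F' : Eu n → Eu n → Eu l) (lam : Eu l) (x d : Eu n) :
    Set (Eu n) :=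
  {v | ∃ s : Fin l → Eu n,
    (∀ i, s i ∈ |lam i| • dirLimSubdiff (fun y => Real.sign (lam i) * F y i) x d
        (Real.sign (lam i) * F' x d i)) ∧
    v = ∑ i, s i}

/-- Standing sum-rule assumption. -/
def SumRule (F : Eu n → Eu l) (F' : Eu n → Eu n → Eu l) : Prop :=
  ∀ (x d : Eu n) (lam : Eu l), scalDirSubdiff F F' lam x d = dirSumSet F F' lam x d

end Problem


section AMReg

variable {n l : ℕ}

/-- The premises on a sequence used to test (strong) AM-regularity in direction `d`. -/
def AMRegDirData (F : Eu n → Eu l) (Γ : Set (Eu l)) (x d : Eu n)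
    (xk : ℕ → Eu n) (lamk δk : ℕ → Eu l) (ξk : ℕ → Eu n) (ξ : Eu n) : Prop :=
  (∀ k, ξk k ∈ scalSubdiff F (lamk k) (xk k)) ∧
  (∀ k, lamk k ∈ limNormal Γ (F (xk k) - δk k)) ∧
  (∀ k, xk k ≠ x) ∧
  Tendsto xk atTop (𝓝 x) ∧ Tendsto δk atTop (𝓝 0) ∧ Tendsto ξk atTop (𝓝 ξ) ∧
  Tendsto (fun k => ‖lamk k‖) atTop atTop ∧
  Tendsto (fun k => ‖xk k - x‖⁻¹ • (xk k - x)) atTop (𝓝 d) ∧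
  Tendsto (fun k => ‖xk k - x‖⁻¹ • δk k) atTop (𝓝 (0 : Eu l)) ∧
  (∃ θ : ℕ → ℝ, (∀ k, 0 ≤ θ k) ∧ Tendsto θ atTop (𝓝 0) ∧
    ∀ k, ‖‖δk k‖ • lamk k - ‖lamk k‖ • δk k‖ ≤ ‖δk k‖ * ‖lamk k‖ * θ k) ∧
  (∃ M : ℝ, ∀ k, ‖δk k‖ * ‖lamk k‖ / ‖xk k - x‖ ≤ M)

/-- AM-regularity in direction `d`. -/
def AMRegDir (F : Eu n → Eu l) (Γ : Set (Eu l)) (x d : Eu n) : Prop :=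
  ∀ (xk : ℕ → Eu n) (lamk δk : ℕ → Eu l) (ξk : ℕ → Eu n) (ξ : Eu n),
    AMRegDirData F Γ x d xk lamk δk ξk ξ →
    ∃ lam ∈ limNormal Γ (F x), ξ ∈ scalSubdiff F lam x

/-- Strong AM-regularity in direction `d`. -/
def StrongAMRegDir (F : Eu n → Eu l) (F' : Eu n → Eu n → Eu l) (Γ : Set (Eu l))
    (x d : Eu n) : Prop :=
  ∀ (xk : ℕ → Eu n) (lamk δk : ℕ → Eu l) (ξk : ℕ → Eu n) (ξ : Eu n),
    AMRegDirData F Γ x d xk lamk δk ξk ξ →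
    ∃ lam ∈ dirLimNormal Γ (F x) (F' x d), ξ ∈ scalDirSubdiff F F' lam x d

end AMReg

/-!
A critical direction `d` provides feasible points `y = x + t d + o(t)` with `f y ≤ f x + o(t)`. For
a large weight `b`, minimizing `f + t⁻¹ ‖· - y‖² + 2 b dist(F ·, Γ)²` near `x` yields a point `z`
within `o(t)` of `y`. At `z` the Fermat rule produces the multiplier `4 b (F z - γ)`, where `γ` is
a projection of `F z` onto `Γ`; it is a regular normal to `Γ` at `F z - δ` for the residual
`δ = F z - γ`, to which it is parallel, and comparing values at `z` and `y` shows that `δ` is `o(t)`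
and the product of their norms `O(t)`. Letting `t → 0`, either the norms of the multipliers tend to
infinity and (strong) AM-regularity in direction `d` applies, or a subsequence of the multipliers
converges and the stationarity conditions pass to the limit directly.
-/

section Sequences

lemma tendsto_norm_atTop_or_exists_subseq_tendsto {X : Type*}
    [NormedAddCommGroup X] [ProperSpace X] (u : ℕ → X) :
    Tendsto (fun k => ‖u k‖) atTop atTop ∨
      ∃ a, ∃ σ : ℕ → ℕ, StrictMono σ ∧ Tendsto (u ∘ σ) atTop (𝓝 a) := by
  refine or_iff_not_imp_left.2 fun hu => ?_
  simp only [Filter.tendsto_atTop, not_forall, not_eventually, not_le] at hu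
  obtain ⟨M, hM⟩ := hu
  obtain ⟨a, -, σ, hσ, ha⟩ := tendsto_subseq_of_frequently_bounded
    (isBounded_closedBall (x := (0 : X)) (r := M))
    (hM.mono fun k hk => mem_closedBall_zero_iff.2 hk.le)
  exact ⟨a, σ, hσ, ha⟩

variable {ι E G : Type*} [NormedAddCommGroup E] [NormedSpace ℝ E] [NormedAddCommGroup G]
  [NormedSpace ℝ G] {L : Filter ι} {t : ι → ℝ}

lemma tendsto_of_tendsto_inv_smul_sub {z : ι → E} {x d : E} (ht : ∀ k, 0 < t k)
    (ht0 : Tendsto t L (𝓝 0)) (hz : Tendsto (fun k => (t k)⁻¹ • (z k - x)) L (𝓝 d)) :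
    Tendsto z L (𝓝 x) := by
  have hsub : Tendsto (fun k => t k • (t k)⁻¹ • (z k - x)) L (𝓝 0) := by
    simpa only [zero_smul] using ht0.smul hz
  simpa only [smul_inv_smul₀ (ht _).ne', tendsto_sub_nhds_zero_iff] using hsub

lemma tendsto_inv_norm_smul {u : ι → E} {v : ι → G} {d : E} {a : G} (ht : ∀ k, 0 < t k)
    (hd : ‖d‖ = 1) (hu : Tendsto (fun k => (t k)⁻¹ • u k) L (𝓝 d))
    (hv : Tendsto (fun k => (t k)⁻¹ • v k) L (𝓝 a)) :
    Tendsto (fun k => ‖u k‖⁻¹ • v k) L (𝓝 a) := by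
  have hnorm : Tendsto (fun k => ‖(t k)⁻¹ • u k‖⁻¹) L (𝓝 1) := by
    simpa only [hd, inv_one] using hu.norm.inv₀ (by simp [hd])
  have hprod := hnorm.smul hv
  rw [one_smul] at hprod
  refine hprod.congr fun k => ?_
  rw [smul_smul, norm_smul_of_nonneg (inv_nonneg.2 (ht k).le), mul_inv, inv_inv,
    mul_right_comm, mul_inv_cancel₀ (ht k).ne', one_mul]

lemma tendsto_inv_smul_sub_of_lipschitzOnWith {F : E → G} {K : NNReal} {U : Set E} {x d : E}
    {v : G} {z : ι → E} (hU : U ∈ 𝓝 x) (hF : LipschitzOnWith K F U)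
    (hv : Tendsto (fun s : ℝ => s⁻¹ • (F (x + s • d) - F x)) (𝓝[>] 0) (𝓝 v))
    (ht : ∀ k, 0 < t k) (ht0 : Tendsto t L (𝓝 0))
    (hz : Tendsto (fun k => (t k)⁻¹ • (z k - x)) L (𝓝 d)) :
    Tendsto (fun k => (t k)⁻¹ • (F (z k) - F x)) L (𝓝 v) := by
  have hray : Tendsto (fun k => (t k)⁻¹ • (F (x + t k • d) - F x)) L (𝓝 v) :=
    hv.comp (tendsto_nhdsWithin_iff.2 ⟨ht0, Eventually.of_forall ht⟩)
  have hzU : ∀ᶠ k in L, z k ∈ U := tendsto_of_tendsto_inv_smul_sub ht ht0 hz hU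
  have hxU : ∀ᶠ k in L, x + t k • d ∈ U := by
    have : Tendsto (fun k => x + t k • d) L (𝓝 x) := by
      simpa using tendsto_const_nhds.add (ht0.smul_const d)
    exact this hU
  have hdiff : Tendsto (fun k => (t k)⁻¹ • (F (z k) - F (x + t k • d))) L (𝓝 0) := by
    have hbound : Tendsto (fun k => (K : ℝ) * ‖(t k)⁻¹ • (z k - x) - d‖) L (𝓝 0) := by
      simpa using (hz.sub_const d).norm.const_mul (K : ℝ)
    refine squeeze_zero_norm' ?_ hbound
    filter_upwards [hzU, hxU] with k hzk hxk
    have hpt : (t k)⁻¹ • (z k - x) - d = (t k)⁻¹ • (z k - (x + t k • d)) := by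
      rw [← sub_sub, smul_sub _ (z k - x), inv_smul_smul₀ (ht k).ne']
    rw [hpt, norm_smul, norm_smul, mul_left_comm]
    gcongr
    exact hF.norm_sub_le hzk hxk
  simpa only [← smul_add, sub_add_sub_cancel', add_zero] using hray.add hdiff

end Sequences

section FrechetSubdifferential

variable {H : Type*} [NormedAddCommGroup H] [InnerProductSpace ℝ H] {φ ψ : H → ℝ}
  {x ξ g : H} {ε : ℝ}

/-- The (analytic) Fréchet `ε`-subdifferential: affine minorants of `φ` at `x` up to an error of
slope `ε`, valid on some neighborhood of `x`. -/
def epsFrechetSubdiff (ε : ℝ) (φ : H → ℝ) (x : H) : Set H :=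
  {ξ | ∀ᶠ y in 𝓝 x, ⟪ξ, y - x⟫ - ε * ‖y - x‖ ≤ φ y - φ x}

/-- The Fréchet (regular) subdifferential, here the analytic counterpart of `regNormal`: its
elements generate regular normals to the epigraph. -/
def frechetSubdiff (φ : H → ℝ) (x : H) : Set H :=
  {ξ | ∀ ε > 0, ξ ∈ epsFrechetSubdiff ε φ x}

lemma neg_mem_frechetSubdiff_of_isLocalMin_add (hψ : HasFDerivAt ψ (innerSL ℝ g) x)
    (hmin : IsLocalMin (fun y => φ y + ψ y) x) : -g ∈ frechetSubdiff φ x := by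
  intro ε hε
  filter_upwards [hmin, hψ.isLittleO.def hε] with y hy hψy
  have hupper := le_of_abs_le hψy
  rw [innerSL_apply_apply] at hupper
  rw [inner_neg_left]
  linarith

lemma hasFDerivAt_const_mul_norm_sub_sq (a : ℝ) (y z : H) :
    HasFDerivAt (fun w => a * ‖w - y‖ ^ 2) (innerSL ℝ ((2 * a) • (z - y))) z := by
  refine ((hasFDerivAt_id z).sub_const y).norm_sq.const_mul a |>.congr_fderiv ?_
  ext w
  simp
  ring

/-- The variational principle behind this fuzzy rule: minimize `φ - ⟪ξ, ·⟫` plus a quadratic term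
so steep that the minimizer over a small closed ball is interior. -/
lemma exists_mem_frechetSubdiff_of_mem_epsFrechetSubdiff [ProperSpace H]
    (hφ : ∀ᶠ y in 𝓝 x, ContinuousAt φ y) (hε : 0 < ε) (hξ : ξ ∈ epsFrechetSubdiff ε φ x)
    {ρ : ℝ} (hρ : 0 < ρ) :
    ∃ x' ∈ closedBall x ρ, ∃ ξ' ∈ closedBall ξ (4 * ε), ξ' ∈ frechetSubdiff φ x' := by
  obtain ⟨r₀, hr₀, hball⟩ := nhds_basis_closedBall.eventually_iff.1 (hφ.and hξ)
  obtain ⟨r, hr, hrr₀, hrρ⟩ : ∃ r > 0, r ≤ r₀ ∧ r ≤ ρ :=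
    ⟨min r₀ ρ, lt_min hr₀ hρ, min_le_left _ _, min_le_right _ _⟩
  have hmem {y : H} (hy : y ∈ closedBall x r) := hball (closedBall_subset_closedBall hrr₀ hy)
  have hcont : ContinuousOn φ (closedBall x r) := fun y hy => (hmem hy).1.continuousWithinAt
  obtain ⟨z, hz, hzmin⟩ := (isCompact_closedBall x r).exists_isMinOn
    (f := fun y => φ y + (2 * ε / r * ‖y - x‖ ^ 2 - ⟪ξ, y - x⟫)) ⟨x, mem_closedBall_self hr.le⟩
    (hcont.add (by fun_prop))
  have hle : ‖z - x‖ ≤ r := mem_closedBall_iff_norm.1 hz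
  have hlt : ‖z - x‖ < r := by
    have hzx := hzmin (mem_closedBall_self hr.le)
    simp only [mem_ofPred_eq, sub_self, inner_zero_right, norm_zero] at hzx
    have hquad : 2 * ε / r * ‖z - x‖ ^ 2 ≤ ε * ‖z - x‖ := by linarith [(hmem hz).2]
    refine hle.lt_of_ne fun heq => ?_
    rw [heq, sq, ← mul_assoc, div_mul_cancel₀ _ hr.ne'] at hquad
    linarith [mul_pos hε hr]
  have hderiv : HasFDerivAt (fun y => 2 * ε / r * ‖y - x‖ ^ 2 - ⟪ξ, y - x⟫)
      (innerSL ℝ ((2 * (2 * ε / r)) • (z - x) - ξ)) z := by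
    rw [map_sub]
    exact (hasFDerivAt_const_mul_norm_sub_sq _ x z).sub
      ((innerSL ℝ ξ).hasFDerivAt.comp z ((hasFDerivAt_id z).sub_const x))
  refine ⟨z, closedBall_subset_closedBall hrρ hz, _, ?_, neg_mem_frechetSubdiff_of_isLocalMin_add
    hderiv (hzmin.isLocalMin (closedBall_mem_nhds_of_mem (mem_ball_iff_norm.2 hlt)))⟩
  rw [neg_sub, mem_closedBall_iff_norm, sub_sub_cancel_left, norm_neg,
    norm_smul_of_nonneg (by positivity)]
  calc 2 * (2 * ε / r) * ‖z - x‖ ≤ 2 * (2 * ε / r) * r := by gcongr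
    _ = 4 * ε := by field_simp; norm_num

lemma pl2_mem_regNormal_epigraphSet (hξ : ξ ∈ frechetSubdiff φ x) :
    pl2 ξ (-1) ∈ regNormal (epigraphSet φ) (pl2 x (φ x)) := by
  refine ⟨le_refl (φ x), ?_⟩
  rintro p ⟨-, dk, tk, hdk, htk, htk0, hmem⟩
  have hinner (q : WithLp 2 (H × ℝ)) : ⟪q, pl2 ξ (-1)⟫ = ⟪ξ, q.fst⟫ - q.snd := by
    simp [WithLp.prod_inner_apply, pl2, real_inner_comm, sub_eq_add_neg]
  have hfst : Tendsto (fun k => (dk k).fst) atTop (𝓝 p.fst) :=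
    ((WithLp.prod_continuous_ofLp 2 _ _).fst.tendsto p).comp hdk
  have hsnd : Tendsto (fun k => (dk k).snd) atTop (𝓝 p.snd) :=
    ((WithLp.prod_continuous_ofLp 2 _ _).snd.tendsto p).comp hdk
  have hbase : Tendsto (fun k => x + tk k • (dk k).fst) atTop (𝓝 x) := by
    simpa using tendsto_const_nhds.add (htk0.smul hfst)
  have hslope {ε : ℝ} (hε : 0 < ε) : ⟪ξ, p.fst⟫ - p.snd ≤ ε * ‖p.fst‖ := by
    refine le_of_tendsto_of_tendsto ((tendsto_const_nhds.inner hfst).sub hsnd)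
      (hfst.norm.const_mul ε) ?_
    filter_upwards [hbase.eventually (hξ ε hε)] with k hk
    have hepi : φ (x + tk k • (dk k).fst) ≤ φ x + tk k * (dk k).snd := hmem k
    rw [add_sub_cancel_left, inner_smul_right, norm_smul_of_nonneg (htk k).le] at hk
    exact le_of_mul_le_mul_left (by linarith) (htk k)
  have hlim : Tendsto (fun ε : ℝ => ε * ‖p.fst‖) (𝓝[>] 0) (𝓝 0) := by
    have := ((continuous_mul_const ‖p.fst‖).tendsto 0).mono_left (nhdsWithin_le_nhds (s := Ioi 0))
    rwa [zero_mul] at this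
  rw [hinner]
  exact ge_of_tendsto hlim (eventually_mem_nhdsWithin.mono fun ε hε => hslope hε)

end FrechetSubdifferential

section NormalCones

variable {H : Type*} [NormedAddCommGroup H] [InnerProductSpace ℝ H] {Ω : Set H} {x d η₀ : H}
  {y η : ℕ → H}

lemma regNormal_subset_limNormal : regNormal Ω x ⊆ limNormal Ω x := fun η hη =>
  ⟨hη.1, fun _ => x, fun _ => η, tendsto_const_nhds, tendsto_const_nhds, fun _ => hη⟩

lemma mem_limNormal_of_tendsto (hx : x ∈ Ω) (hy : Tendsto y atTop (𝓝 x))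
    (hη : Tendsto η atTop (𝓝 η₀)) (h : ∀ᶠ k in atTop, η k ∈ regNormal Ω (y k)) :
    η₀ ∈ limNormal Ω x := by
  obtain ⟨N, hN⟩ := eventually_atTop.1 h
  exact ⟨hx, fun k => y (k + N), fun k => η (k + N), (tendsto_add_atTop_iff_nat N).2 hy,
    (tendsto_add_atTop_iff_nat N).2 hη, fun k => hN _ (Nat.le_add_left N k)⟩

lemma mem_dirLimNormal_of_tendsto {t : ℕ → ℝ} (hx : x ∈ Ω) (ht : ∀ k, 0 < t k)
    (ht0 : Tendsto t atTop (𝓝 0)) (hy : Tendsto (fun k => (t k)⁻¹ • (y k - x)) atTop (𝓝 d))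
    (hη : Tendsto η atTop (𝓝 η₀)) (h : ∀ᶠ k in atTop, η k ∈ regNormal Ω (y k)) :
    η₀ ∈ dirLimNormal Ω x d := by
  obtain ⟨N, hN⟩ := eventually_atTop.1 h
  refine ⟨hx, fun k => (t (k + N))⁻¹ • (y (k + N) - x), fun k => t (k + N), fun k => η (k + N),
    (tendsto_add_atTop_iff_nat (f := fun k => (t k)⁻¹ • (y k - x)) N).2 hy, fun k => ht _,
    (tendsto_add_atTop_iff_nat N).2 ht0, (tendsto_add_atTop_iff_nat N).2 hη, fun k => ?_⟩
  rw [smul_inv_smul₀ (ht _).ne', add_sub_cancel]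
  exact hN _ (Nat.le_add_left N k)

lemma smul_sub_mem_regNormal_of_dist_eq_infDist {p γ : H} (hγ : γ ∈ Ω)
    (hdist : infDist p Ω = dist p γ) {c : ℝ} (hc : 0 ≤ c) : c • (p - γ) ∈ regNormal Ω γ := by
  refine ⟨hγ, ?_⟩
  rintro w ⟨-, wk, tk, hwk, htk, htk0, hmem⟩
  have hstep (k : ℕ) : 2 * ⟪wk k, p - γ⟫ ≤ tk k * ‖wk k‖ ^ 2 := by
    have hsq : ‖p - γ‖ ^ 2 ≤ ‖(p - γ) - tk k • wk k‖ ^ 2 := by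
      rw [sub_sub, ← dist_eq_norm, ← dist_eq_norm, ← hdist]
      gcongr
      · exact infDist_nonneg
      · exact infDist_le_dist_of_mem (hmem k)
    rw [norm_sub_sq_real (p - γ), inner_smul_right, norm_smul_of_nonneg (htk k).le,
      real_inner_comm, mul_pow] at hsq
    exact le_of_mul_le_mul_left (by linarith) (htk k)
  have hlim : 2 * ⟪w, p - γ⟫ ≤ 0 * ‖w‖ ^ 2 :=
    le_of_tendsto_of_tendsto' ((hwk.inner tendsto_const_nhds).const_mul 2)
      (htk0.mul (hwk.norm.pow 2)) hstep
  rw [inner_smul_right]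
  exact mul_nonpos_of_nonneg_of_nonpos hc (by linarith)

end NormalCones

section LimitingSubdifferential

variable {H : Type*} [NormedAddCommGroup H] [InnerProductSpace ℝ H] {φ : H → ℝ} {x d ξ₀ : H}
  {z ξ : ℕ → H}

lemma tendsto_pl2 {ι X : Type*} [NormedAddCommGroup X] {L : Filter ι} {u : ι → X} {r : ι → ℝ}
    {u₀ : X} {r₀ : ℝ} (hu : Tendsto u L (𝓝 u₀)) (hr : Tendsto r L (𝓝 r₀)) :
    Tendsto (fun k => pl2 (u k) (r k)) L (𝓝 (pl2 u₀ r₀)) :=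
  ((WithLp.prod_continuous_toLp 2 X ℝ).tendsto (u₀, r₀)).comp (hu.prodMk_nhds hr)

lemma frechetSubdiff_subset_limSubdiff : frechetSubdiff φ x ⊆ limSubdiff φ x := fun _ hξ =>
  regNormal_subset_limNormal (pl2_mem_regNormal_epigraphSet hξ)

lemma mem_limSubdiff_of_tendsto (hφ : ContinuousAt φ x) (hz : Tendsto z atTop (𝓝 x))
    (hξ : Tendsto ξ atTop (𝓝 ξ₀)) (h : ∀ᶠ k in atTop, ξ k ∈ frechetSubdiff φ (z k)) :
    ξ₀ ∈ limSubdiff φ x :=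
  mem_limNormal_of_tendsto (le_refl (φ x)) (tendsto_pl2 hz (hφ.tendsto.comp hz))
    (tendsto_pl2 hξ tendsto_const_nhds) (h.mono fun _ => pl2_mem_regNormal_epigraphSet)

lemma mem_dirLimSubdiff_of_tendsto {t : ℕ → ℝ} {r : ℝ} (ht : ∀ k, 0 < t k)
    (ht0 : Tendsto t atTop (𝓝 0)) (hz : Tendsto (fun k => (t k)⁻¹ • (z k - x)) atTop (𝓝 d))
    (hφ : Tendsto (fun k => (t k)⁻¹ * (φ (z k) - φ x)) atTop (𝓝 r))
    (hξ : Tendsto ξ atTop (𝓝 ξ₀)) (h : ∀ᶠ k in atTop, ξ k ∈ frechetSubdiff φ (z k)) :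
    ξ₀ ∈ dirLimSubdiff φ x d r :=
  mem_dirLimNormal_of_tendsto (y := fun k => pl2 (z k) (φ (z k))) (le_refl (φ x)) ht ht0
    (tendsto_pl2 hz hφ) (tendsto_pl2 hξ tendsto_const_nhds)
    (h.mono fun _ => pl2_mem_regNormal_epigraphSet)

end LimitingSubdifferential

section Scalarization

variable {E G : Type*} [NormedAddCommGroup E] [InnerProductSpace ℝ E] [NormedAddCommGroup G]
  [InnerProductSpace ℝ G] {F : E → G} {K : NNReal} {U : Set E}

lemma mem_epsFrechetSubdiff_inner_of_lipschitzOnWith {z ξ : E} {lam μ : G} {ε : ℝ}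
    (hU : U ∈ 𝓝 z) (hF : LipschitzOnWith K F U)
    (hξ : ξ ∈ frechetSubdiff (fun y => ⟪lam, F y⟫) z) (hε : 0 < ε) :
    ξ ∈ epsFrechetSubdiff (K * ‖μ - lam‖ + ε) (fun y => ⟪μ, F y⟫) z := by
  filter_upwards [hξ ε hε, hU] with y hy hyU
  have hpert : -(‖μ - lam‖ * (K * ‖y - z‖)) ≤ ⟪μ - lam, F y - F z⟫ := by
    refine neg_le_of_neg_le ((neg_le_abs _).trans ((abs_real_inner_le_norm _ _).trans ?_))
    gcongr
    exact hF.norm_sub_le hyU (mem_of_mem_nhds hU)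
  rw [inner_sub_left, inner_sub_right, inner_sub_right] at hpert
  linarith

/-- Along convergent multipliers `lam k → lam₀` one may pass to subgradients of the single function
`⟪lam₀, F ·⟫`: the Lipschitz constant turns `‖lam₀ - lam k‖` into a vanishing slope error, which
the fuzzy rule removes at the cost of moving `z k` by `o(t k)`. -/
lemma exists_seq_frechetSubdiff_inner_of_tendsto [ProperSpace E] {x : E} {lam₀ : G} {t : ℕ → ℝ}
    {z ξ : ℕ → E} {lam : ℕ → G} (hU : U ∈ 𝓝 x) (hF : LipschitzOnWith K F U) (ht : ∀ k, 0 < t k)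
    (hz : Tendsto z atTop (𝓝 x)) (hlam : Tendsto lam atTop (𝓝 lam₀))
    (hξ : ∀ k, ξ k ∈ frechetSubdiff (fun y => ⟪lam k, F y⟫) (z k)) :
    ∃ z' ξ' : ℕ → E, Tendsto (fun k => (t k)⁻¹ • (z' k - z k)) atTop (𝓝 0) ∧
      Tendsto (fun k => ξ' k - ξ k) atTop (𝓝 0) ∧
      ∀ᶠ k in atTop, ξ' k ∈ frechetSubdiff (fun y => ⟪lam₀, F y⟫) (z' k) := by
  let η (k : ℕ) : ℝ := 1 / ((k : ℝ) + 1)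
  have hη (k : ℕ) : 0 < η k := Nat.one_div_pos_of_nat
  have hη0 : Tendsto η atTop (𝓝 0) := tendsto_one_div_add_atTop_nhds_zero_nat
  have hfuzzy : ∀ᶠ k in atTop, ∃ p : E × E, ‖p.1 - z k‖ ≤ t k * η k ∧
      ‖p.2 - ξ k‖ ≤ 4 * (K * ‖lam₀ - lam k‖ + η k) ∧
      p.2 ∈ frechetSubdiff (fun y => ⟪lam₀, F y⟫) p.1 := by
    filter_upwards [hz.eventually (eventually_mem_nhds_iff.2 hU)] with k hk
    have hcont : ∀ᶠ y in 𝓝 (z k), ContinuousAt (fun y => ⟪lam₀, F y⟫) y :=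
      (eventually_mem_nhds_iff.2 hk).mono fun y hy =>
        continuousAt_const.inner (hF.continuousOn.continuousAt hy)
    obtain ⟨z', hz', ξ', hξ', hmem⟩ := exists_mem_frechetSubdiff_of_mem_epsFrechetSubdiff hcont
      (add_pos_of_nonneg_of_pos (by positivity) (hη k))
      (mem_epsFrechetSubdiff_inner_of_lipschitzOnWith hk hF (hξ k) (hη k))
      (mul_pos (ht k) (hη k))
    exact ⟨(z', ξ'), mem_closedBall_iff_norm.1 hz', mem_closedBall_iff_norm.1 hξ', hmem⟩
  obtain ⟨p, hp⟩ := hfuzzy.choice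
  refine ⟨fun k => (p k).1, fun k => (p k).2, ?_, ?_, hp.mono fun k hk => hk.2.2⟩
  · refine squeeze_zero_norm' (hp.mono fun k hk => ?_) hη0
    rw [norm_smul_of_nonneg (inv_nonneg.2 (ht k).le), inv_mul_le_iff₀ (ht k)]
    exact hk.1
  · refine squeeze_zero_norm' (hp.mono fun k hk => hk.2.1) ?_
    simpa using (((hlam.const_sub lam₀).norm.const_mul (K : ℝ)).add hη0).const_mul 4

end Scalarization

section Penalization

/-- For `m` large, `m * p` alone already compensates any drop of `f` below `c`, so the other half of
the penalty `2 * m * p` is left over for the estimate. -/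
lemma exists_isMinOn_penalized {X : Type*} [TopologicalSpace X] [T2Space X] {B : Set X}
    (hB : IsCompact B) {f q p : X → ℝ} (hf : ContinuousOn f B) (hq : ContinuousOn q B)
    (hp : ContinuousOn p B) (hp0 : ∀ z ∈ B, 0 ≤ p z) {c : ℝ} (hc : ∀ z ∈ B, p z = 0 → c < f z)
    {y : X} (hy : y ∈ B) (hqy : q y = 0) (hpy : p y = 0) (M : ℝ) :
    ∃ m ≥ M, ∃ z ∈ B, IsMinOn (fun w => f w + q w + 2 * m * p w) B z ∧
      q z + m * p z ≤ f y - c := by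
  have hpos : ∀ z ∈ B ∩ f ⁻¹' Iic c, 0 < p z := fun z ⟨hz, hzc⟩ =>
    (hp0 z hz).lt_of_ne fun h => (hc z hz h.symm).not_ge hzc
  obtain ⟨C, hC⟩ : BddAbove ((fun z => (c - f z) / p z) '' (B ∩ f ⁻¹' Iic c)) :=
    IsCompact.bddAbove_image
      (hB.of_isClosed_subset (hf.preimage_isClosed_of_isClosed hB.isClosed isClosed_Iic)
        inter_subset_left)
      (((continuousOn_const.sub hf).mono inter_subset_left).div (hp.mono inter_subset_left)
        fun z hz => (hpos z hz).ne')
  let m := max M (max C 0)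
  have hm0 : 0 ≤ m := le_max_of_le_right (le_max_right _ _)
  have hlow : ∀ z ∈ B, c ≤ f z + m * p z := by
    intro z hz
    rcases le_total (f z) c with hzc | hzc
    · have hratio : (c - f z) / p z ≤ m :=
        (hC (mem_image_of_mem _ ⟨hz, hzc⟩)).trans (le_max_of_le_right (le_max_left _ _))
      rw [div_le_iff₀ (hpos z ⟨hz, hzc⟩)] at hratio
      linarith
    · linarith [mul_nonneg hm0 (hp0 z hz)]
  obtain ⟨z, hz, hzmin⟩ := hB.exists_isMinOn ⟨y, hy⟩
    ((hf.add hq).add (hp.const_mul (2 * m)))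
  refine ⟨m, le_max_left _ _, z, hz, hzmin, ?_⟩
  have hzy : f z + q z + 2 * m * p z ≤ f y + q y + 2 * m * p y := hzmin hy
  rw [hqy, hpy] at hzy
  linarith [hlow z hz]

lemma le_mul_of_inv_mul_sq_le {a c t : ℝ} (hc : 0 ≤ c) (ht : 0 < t)
    (h : t⁻¹ * a ^ 2 ≤ c ^ 2 * t) : a ≤ c * t := by
  rw [inv_mul_le_iff₀ ht] at h
  exact le_of_abs_le (abs_le_of_sq_le_sq (h.trans_eq (by ring)) (by positivity))

/-- The minimizer of the penalized problem over the ball is interior: the penalty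
`t⁻¹ * ‖· - y‖ ^ 2` keeps it near the feasible point `y`. -/
lemma exists_isLocalMin_penalized {E Y : Type*} [NormedAddCommGroup E] [NormedSpace ℝ E]
    [ProperSpace E] [PseudoMetricSpace Y] {f : E → ℝ} {F : E → Y} {Γ : Set Y} {x d y : E}
    {r ε t : ℝ}
    (hf : ContinuousOn f (closedBall x r)) (hF : ContinuousOn F (closedBall x r))
    (hΓ : IsClosed Γ) (hmin : ∀ w ∈ closedBall x r, F w ∈ Γ → f x ≤ f w) (hy : F y ∈ Γ)
    (hε0 : 0 < ε) (hε : ε ≤ 1) (ht : 0 < t) (htr : t * (1 + ‖d‖) < r)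
    (hyd : ‖y - x - t • d‖ ≤ ε / 2 * t) (hfy : f y - f x ≤ ε ^ 2 / 32 * t) :
    ∃ b ≥ t⁻¹, ∃ z ∈ closedBall x r,
      IsLocalMin (fun w => f w + t⁻¹ * ‖w - y‖ ^ 2 + 2 * b * infDist (F w) Γ ^ 2) z ∧
      ‖z - x - t • d‖ ≤ ε * t ∧ ‖z - y‖ ≤ ε / 4 * t ∧
      b * infDist (F z) Γ ^ 2 ≤ (ε / 4) ^ 2 * t := by
  have hinterior {w : E} (hw : ‖w - x - t • d‖ ≤ ε * t) : w ∈ ball x r := by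
    rw [mem_ball_iff_norm]
    calc ‖w - x‖ ≤ ‖w - x - t • d‖ + ‖t • d‖ := norm_le_norm_sub_add _ _
      _ ≤ 1 * t + t * ‖d‖ := by rw [norm_smul_of_nonneg ht.le]; gcongr; exact hw.trans (by gcongr)
      _ = t * (1 + ‖d‖) := by ring
      _ < r := htr
  have hfar {w : E} (hw : w ∈ closedBall x r) (hwΓ : infDist (F w) Γ ^ 2 = 0) :
      f x - ε ^ 2 / 32 * t < f w := by
    have hmem : F w ∈ Γ :=
      (hΓ.mem_iff_infDist_zero ⟨F y, hy⟩).2 (pow_eq_zero_iff two_ne_zero |>.1 hwΓ)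
    exact (sub_lt_self _ (by positivity)).trans_le (hmin w hw hmem)
  obtain ⟨b, hb, z, hz, hzmin, hgap⟩ := exists_isMinOn_penalized (isCompact_closedBall x r)
    (q := fun w => t⁻¹ * ‖w - y‖ ^ 2) (p := fun w => infDist (F w) Γ ^ 2) hf (by fun_prop)
    (((continuous_infDist_pt Γ).comp_continuousOn hF).pow 2) (fun _ _ => sq_nonneg _)
    (fun _ => hfar) (ball_subset_closedBall (hinterior (hyd.trans (by gcongr; linarith))))
    (by simp) (by simp [infDist_zero_of_mem hy]) t⁻¹
  have hb0 : 0 ≤ b := (inv_nonneg.2 ht.le).trans hb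
  have hzy : ‖z - y‖ ≤ ε / 4 * t :=
    le_mul_of_inv_mul_sq_le (by positivity) ht
      (by linarith [mul_nonneg hb0 (sq_nonneg (infDist (F z) Γ))])
  have hzd : ‖z - x - t • d‖ ≤ ε * t :=
    calc ‖z - x - t • d‖ = ‖(z - y) + (y - x - t • d)‖ := by congr 1; abel
      _ ≤ ε / 4 * t + ε / 2 * t := norm_add_le_of_le hzy hyd
      _ ≤ ε * t := by linarith [mul_pos hε0 ht]
  exact ⟨b, hb, z, hz, hzmin.isLocalMin (closedBall_mem_nhds_of_mem (hinterior hzd)), hzd, hzy,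
    by linarith [mul_nonneg (inv_nonneg.2 ht.le) (sq_nonneg ‖z - y‖)]⟩

variable {E G : Type*} [NormedAddCommGroup E] [InnerProductSpace ℝ E] [NormedAddCommGroup G]
  [InnerProductSpace ℝ G] {f : E → ℝ} {F : E → G} {Γ : Set G} {K : NNReal} {U : Set E}

/-- Freezing a projection `γ` of `F z` replaces the squared distance by `‖F · - γ‖ ^ 2`, which is
`2 * ⟪F z - γ, F ·⟫` up to a constant and the second-order term `‖F · - F z‖ ^ 2`. -/
lemma neg_mem_frechetSubdiff_inner_of_isLocalMin_penalized {g y z : E} {γ : G} {a b : ℝ}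
    (hf : HasFDerivAt f (innerSL ℝ g) z) (hU : U ∈ 𝓝 z) (hF : LipschitzOnWith K F U)
    (hγ : γ ∈ Γ) (hdist : infDist (F z) Γ = dist (F z) γ) (hb : 0 ≤ b)
    (hmin : IsLocalMin (fun w => f w + a * ‖w - y‖ ^ 2 + b * infDist (F w) Γ ^ 2) z) :
    -(g + (2 * a) • (z - y)) ∈ frechetSubdiff (fun w => ⟪(2 * b) • (F z - γ), F w⟫) z := by
  have hsecond : HasFDerivAt (fun w => b * ‖F w - F z‖ ^ 2) (0 : E →L[ℝ] ℝ) z := by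
    refine Asymptotics.IsBigO.hasFDerivAt (n := 2) ?_ one_lt_two
    refine (Asymptotics.IsBigO.pow ?_ 2).const_mul_left b
    refine Asymptotics.IsBigO.of_bound K ?_
    filter_upwards [hU] with w hw
    simpa only [norm_norm] using hF.norm_sub_le hw (mem_of_mem_nhds hU)
  have hderiv : HasFDerivAt (fun w => f w + a * ‖w - y‖ ^ 2 + b * ‖F w - F z‖ ^ 2)
      (innerSL ℝ (g + (2 * a) • (z - y))) z := by
    rw [map_add, ← add_zero (innerSL ℝ g + _)]
    exact (hf.add (hasFDerivAt_const_mul_norm_sub_sq a y z)).add hsecond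
  refine neg_mem_frechetSubdiff_of_isLocalMin_add hderiv (hmin.mono fun w hw => ?_)
  have hproj : b * infDist (F w) Γ ^ 2 ≤ b * ‖F w - γ‖ ^ 2 := by
    rw [← dist_eq_norm]
    gcongr
    · exact infDist_nonneg
    · exact infDist_le_dist_of_mem hγ
  have hexpand : ‖F w - γ‖ ^ 2 =
      ‖F w - F z‖ ^ 2 + 2 * (⟪F z - γ, F w⟫ - ⟪F z - γ, F z⟫) + ‖F z - γ‖ ^ 2 := by
    rw [← sub_add_sub_cancel (F w) (F z) γ, norm_add_sq_real, real_inner_comm, inner_sub_right]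
  rw [hexpand] at hproj
  simp only [hdist, dist_eq_norm] at hw
  simp only [sub_self, norm_zero, real_inner_smul_left]
  linarith

end Penalization

section ApproximateStationarity

variable {E G : Type*} [NormedAddCommGroup E] [InnerProductSpace ℝ E] [NormedAddCommGroup G]
  [InnerProductSpace ℝ G] {f : E → ℝ} {F : E → G} {Γ : Set G} {K : NNReal} {U : Set E} {x d : E}

lemma eventually_hasFDerivAt_gradient [CompleteSpace E] (hf : ContDiffAt ℝ 1 f x) {η : ℝ}
    (hη : 0 < η) : ∀ᶠ z in 𝓝 x, HasFDerivAt f (innerSL ℝ (gradient f z)) z ∧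
      ‖gradient f z - gradient f x‖ ≤ η := by
  have hcont : ContinuousAt (gradient f) x :=
    (InnerProductSpace.toDual ℝ E).symm.continuous.continuousAt.comp
      (hf.continuousAt_fderiv one_ne_zero)
  filter_upwards [hf.eventually (by simp), hcont.eventually_mem (closedBall_mem_nhds _ hη)]
    with z hz hzη
  exact ⟨(hz.differentiableAt one_ne_zero).hasGradientAt.hasFDerivAt,
    mem_closedBall_iff_norm.1 hzη⟩

lemma exists_mem_norm_sub_le_of_mem_tanCone {Ω : Set E} {g : E} {e s τ : ℝ}
    (hf : HasFDerivAt f (innerSL ℝ g) x) (hgd : ⟪g, d⟫ ≤ 0) (hd : d ∈ tanCone Ω x)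
    (he : 0 < e) (hs : 0 < s) (hτ : 0 < τ) :
    ∃ t, 0 < t ∧ t < τ ∧ ∃ y ∈ Ω, ‖y - x - t • d‖ ≤ e * t ∧ f y - f x ≤ s * t := by
  obtain ⟨-, dk, tk, hdk, htk, htk0, hmem⟩ := hd
  have hquot : Tendsto (fun k => (tk k)⁻¹ * (f (x + tk k • dk k) - f x)) atTop (𝓝 ⟪g, d⟫) :=
    hf.hasFDerivWithinAt.lim (by simpa using htk0.smul hdk)
      (Eventually.of_forall fun _ => mem_univ _)
      (hdk.congr fun k => (inv_smul_smul₀ (htk k).ne' _).symm)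
  obtain ⟨k, hkτ, hke, hks⟩ := ((htk0.eventually_lt_const hτ).and
    ((hdk.eventually_mem (closedBall_mem_nhds d he)).and
      (hquot.eventually_le_const (hgd.trans_lt hs)))).exists
  refine ⟨tk k, htk k, hkτ, _, hmem k, ?_, ?_⟩
  · rw [add_sub_cancel_left, ← smul_sub, norm_smul_of_nonneg (htk k).le, mul_comm]
    gcongr
    · exact (htk k).le
    · exact mem_closedBall_iff_norm.1 hke
  · rwa [inv_mul_le_iff₀ (htk k), mul_comm] at hks

/-- `z`, with multiplier `lam`, residual `δ` and subgradient `ξ` of `⟪lam, F ·⟫`, is stationary up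
to `ε` at the scale `t` along the ray `x + t • d`, for the target subgradient `ξ₀` (which is
`-∇f x` in the application). The conditions are those of a sequence in the definition of
directional AM-regularity, quantified; there `‖z - x‖` plays the role of `t`. -/
structure IsApproxStationary (F : E → G) (Γ : Set G) (x d ξ₀ : E) (ε t : ℝ) (z : E) (lam δ : G)
    (ξ : E) : Prop where
  pos : 0 < t
  lt : t < ε
  norm_point_le : ‖z - x - t • d‖ ≤ ε * t
  norm_residual_le : ‖δ‖ ≤ ε * t
  sameRay : SameRay ℝ δ lam
  norm_mul_norm_le : ‖δ‖ * ‖lam‖ ≤ t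
  mem_regNormal : lam ∈ regNormal Γ (F z - δ)
  mem_frechetSubdiff : ξ ∈ frechetSubdiff (fun w => ⟪lam, F w⟫) z
  norm_subgradient_le : ‖ξ - ξ₀‖ ≤ ε

lemma exists_isApproxStationary_of_isLocalMin_penalized [ProperSpace G] {g g₀ y z : E}
    {ε t b : ℝ} (hΓ : IsClosed Γ) (hΓne : Γ.Nonempty) (hf : HasFDerivAt f (innerSL ℝ g) z)
    (hU : U ∈ 𝓝 z) (hF : LipschitzOnWith K F U)
    (hmin : IsLocalMin (fun w => f w + t⁻¹ * ‖w - y‖ ^ 2 + 2 * b * infDist (F w) Γ ^ 2) z)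
    (ht : 0 < t) (htε : t < ε) (hε : ε ≤ 1) (hb : t⁻¹ ≤ b) (hzd : ‖z - x - t • d‖ ≤ ε * t)
    (hzy : ‖z - y‖ ≤ ε / 4 * t) (hpen : b * infDist (F z) Γ ^ 2 ≤ (ε / 4) ^ 2 * t)
    (hg : ‖g - g₀‖ ≤ ε / 2) :
    ∃ lam δ ξ, IsApproxStationary F Γ x d (-g₀) ε t z lam δ ξ := by
  obtain ⟨γ, hγ, hdist⟩ := hΓ.exists_infDist_eq_dist hΓne (F z)
  have hε0 : 0 < ε := ht.trans htε
  have hb0 : 0 ≤ b := (inv_nonneg.2 ht.le).trans hb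
  rw [hdist, dist_eq_norm] at hpen
  have hres : ‖F z - γ‖ ≤ ε / 4 * t :=
    le_mul_of_inv_mul_sq_le (by positivity) ht
      ((mul_le_mul_of_nonneg_right hb (sq_nonneg _)).trans hpen)
  refine ⟨(2 * (2 * b)) • (F z - γ), F z - γ, _, ht, htε, hzd, hres.trans (by gcongr; linarith),
    SameRay.sameRay_nonneg_smul_right _ (by positivity), ?_, ?_,
    neg_mem_frechetSubdiff_inner_of_isLocalMin_penalized hf hU hF hγ hdist (by positivity) hmin,
    ?_⟩
  · calc ‖F z - γ‖ * ‖(2 * (2 * b)) • (F z - γ)‖ = 4 * (b * ‖F z - γ‖ ^ 2) := by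
          rw [norm_smul_of_nonneg (by positivity)]; ring
      _ ≤ 4 * ((ε / 4) ^ 2 * t) := by gcongr
      _ = ε ^ 2 / 4 * t := by ring
      _ ≤ t := mul_le_of_le_one_left ht.le (by nlinarith)
  · rw [sub_sub_cancel]
    exact smul_sub_mem_regNormal_of_dist_eq_infDist hγ hdist (by positivity)
  · calc ‖-(g + (2 * t⁻¹) • (z - y)) - -g₀‖ = ‖(g - g₀) + (2 * t⁻¹) • (z - y)‖ := by
          rw [← norm_neg]; congr 1; abel
      _ ≤ ε / 2 + 2 * t⁻¹ * (ε / 4 * t) := norm_add_le_of_le hg (by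
          rw [norm_smul_of_nonneg (by positivity)]; gcongr)
      _ = ε := by field_simp; norm_num

lemma exists_isApproxStationary [ProperSpace E] [ProperSpace G] {ε : ℝ} (hf : ContDiffAt ℝ 1 f x)
    (hU : U ∈ 𝓝 x) (hF : LipschitzOnWith K F U) (hΓ : IsClosed Γ)
    (hmin : IsLocalMinOn f (F ⁻¹' Γ) x) (hgd : ⟪gradient f x, d⟫ ≤ 0)
    (hd : d ∈ tanCone (F ⁻¹' Γ) x) (hε0 : 0 < ε) (hε : ε ≤ 1) :
    ∃ t z lam δ ξ, IsApproxStationary F Γ x d (-gradient f x) ε t z lam δ ξ := by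
  obtain ⟨r, hr, hball⟩ := nhds_basis_closedBall.eventually_iff.1
    ((eventually_mem_nhds_iff.2 hU).and ((eventually_hasFDerivAt_gradient hf (half_pos hε0)).and
      (eventually_nhdsWithin_iff.1 hmin)))
  obtain ⟨t, ht, htτ, y, hy, hyd, hfy⟩ := exists_mem_norm_sub_le_of_mem_tanCone
    (hball (mem_closedBall_self hr.le)).2.1.1 hgd hd (half_pos hε0)
    (s := ε ^ 2 / 32) (by positivity) (τ := min ε (r / (1 + ‖d‖))) (by positivity)
  obtain ⟨htε, htr⟩ := lt_min_iff.1 htτ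
  obtain ⟨b, hb, z, hz, hzmin, hzd, hzy, hpen⟩ := exists_isLocalMin_penalized
    (fun w hw => (hball hw).2.1.1.continuousAt.continuousWithinAt)
    (fun w hw => (hF.continuousOn.continuousAt (hball hw).1).continuousWithinAt) hΓ
    (fun w hw => (hball hw).2.2) hy hε0 hε ht ((lt_div_iff₀ (by positivity)).1 htr) hyd hfy
  obtain ⟨hzU, ⟨hzf, hzg⟩, -⟩ := hball hz
  exact ⟨t, z, exists_isApproxStationary_of_isLocalMin_penalized hΓ ⟨F x, hd.1⟩ hzf hzU hF hzmin
    ht htε hε hb hzd hzy hpen hzg⟩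

end ApproximateStationarity

namespace IsApproxStationary

variable {E G : Type*} [NormedAddCommGroup E] [InnerProductSpace ℝ E] [NormedAddCommGroup G]
  [InnerProductSpace ℝ G] {F : E → G} {Γ : Set G} {K : NNReal} {U : Set E} {x d ξ₀ : E}

lemma ne_base {ε t : ℝ} {z ξ : E} {lam δ : G}
    (h : IsApproxStationary F Γ x d ξ₀ ε t z lam δ ξ) (hd : ‖d‖ = 1) (hε : ε < 1) : z ≠ x := by
  rintro rfl
  have hle : t ≤ ε * t := by
    simpa only [sub_self, zero_sub, norm_neg, norm_smul_of_nonneg h.pos.le, hd, mul_one]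
      using h.norm_point_le
  exact hle.not_gt (mul_lt_of_lt_one_left h.pos hε)

variable {ε t : ℕ → ℝ} {z ξ : ℕ → E} {lam δ : ℕ → G} {lam₀ v : G}

lemma tendsto_scale
    (h : ∀ k, IsApproxStationary F Γ x d ξ₀ (ε k) (t k) (z k) (lam k) (δ k) (ξ k))
    (hε : Tendsto ε atTop (𝓝 0)) : Tendsto t atTop (𝓝 0) :=
  squeeze_zero (fun k => (h k).pos.le) (fun k => (h k).lt.le) hε

lemma tendsto_inv_smul_sub
    (h : ∀ k, IsApproxStationary F Γ x d ξ₀ (ε k) (t k) (z k) (lam k) (δ k) (ξ k))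
    (hε : Tendsto ε atTop (𝓝 0)) : Tendsto (fun k => (t k)⁻¹ • (z k - x)) atTop (𝓝 d) := by
  refine tendsto_iff_norm_sub_tendsto_zero.2
    (squeeze_zero (fun _ => norm_nonneg _) (fun k => ?_) hε)
  have ht := (h k).pos
  calc ‖(t k)⁻¹ • (z k - x) - d‖ = (t k)⁻¹ * ‖z k - x - t k • d‖ := by
        rw [← norm_smul_of_nonneg (inv_nonneg.2 ht.le), smul_sub _ (z k - x),
          inv_smul_smul₀ ht.ne']
    _ ≤ ε k := by
        rw [inv_mul_le_iff₀ ht, mul_comm]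
        exact (h k).norm_point_le

lemma tendsto_inv_smul_residual
    (h : ∀ k, IsApproxStationary F Γ x d ξ₀ (ε k) (t k) (z k) (lam k) (δ k) (ξ k))
    (hε : Tendsto ε atTop (𝓝 0)) : Tendsto (fun k => (t k)⁻¹ • δ k) atTop (𝓝 0) := by
  refine squeeze_zero_norm (fun k => ?_) hε
  rw [norm_smul_of_nonneg (inv_nonneg.2 (h k).pos.le), inv_mul_le_iff₀ (h k).pos, mul_comm]
  exact (h k).norm_residual_le

lemma tendsto_subgradient
    (h : ∀ k, IsApproxStationary F Γ x d ξ₀ (ε k) (t k) (z k) (lam k) (δ k) (ξ k))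
    (hε : Tendsto ε atTop (𝓝 0)) : Tendsto ξ atTop (𝓝 ξ₀) :=
  tendsto_iff_norm_sub_tendsto_zero.2
    (squeeze_zero (fun _ => norm_nonneg _) (fun k => (h k).norm_subgradient_le) hε)

lemma tendsto_point
    (h : ∀ k, IsApproxStationary F Γ x d ξ₀ (ε k) (t k) (z k) (lam k) (δ k) (ξ k))
    (hε : Tendsto ε atTop (𝓝 0)) : Tendsto z atTop (𝓝 x) :=
  tendsto_of_tendsto_inv_smul_sub (fun k => (h k).pos) (tendsto_scale h hε)
    (tendsto_inv_smul_sub h hε)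

lemma tendsto_residual
    (h : ∀ k, IsApproxStationary F Γ x d ξ₀ (ε k) (t k) (z k) (lam k) (δ k) (ξ k))
    (hε : Tendsto ε atTop (𝓝 0)) : Tendsto δ atTop (𝓝 0) :=
  tendsto_of_tendsto_inv_smul_sub (fun k => (h k).pos) (tendsto_scale h hε)
    (by simpa only [sub_zero] using tendsto_inv_smul_residual h hε)

lemma amRegDirData {n l : ℕ} {F : Eu n → Eu l} {Γ : Set (Eu l)} {x d ξ₀ : Eu n}
    {z ξ : ℕ → Eu n} {lam δ : ℕ → Eu l}
    (h : ∀ k, IsApproxStationary F Γ x d ξ₀ (ε k) (t k) (z k) (lam k) (δ k) (ξ k))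
    (hε : Tendsto ε atTop (𝓝 0)) (hε1 : ∀ k, ε k < 1) (hd : ‖d‖ = 1)
    (hlam : Tendsto (fun k => ‖lam k‖) atTop atTop) : AMRegDirData F Γ x d z lam δ ξ ξ₀ := by
  have ht (k : ℕ) : 0 < t k := (h k).pos
  have hz := tendsto_inv_smul_sub h hε
  have hratio : Tendsto (fun k => ‖z k - x‖⁻¹ • t k) atTop (𝓝 1) :=
    tendsto_inv_norm_smul ht hd hz
      (tendsto_const_nhds.congr fun k => (inv_mul_cancel₀ (ht k).ne').symm)
  obtain ⟨M, hM⟩ := hratio.bddAbove_range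
  refine ⟨fun k => frechetSubdiff_subset_limSubdiff (h k).mem_frechetSubdiff,
    fun k => regNormal_subset_limNormal (h k).mem_regNormal,
    fun k => (h k).ne_base hd (hε1 k), tendsto_point h hε, tendsto_residual h hε,
    tendsto_subgradient h hε, hlam,
    tendsto_inv_norm_smul ht hd hz hz,
    tendsto_inv_norm_smul ht hd hz (tendsto_inv_smul_residual h hε),
    ⟨0, fun _ => le_rfl, tendsto_const_nhds, fun k => ?_⟩, M, fun k => ?_⟩
  · rw [(h k).sameRay.norm_smul_eq, sub_self, norm_zero, Pi.zero_apply, mul_zero]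
  · calc ‖δ k‖ * ‖lam k‖ / ‖z k - x‖ ≤ t k / ‖z k - x‖ := by
          gcongr
          exact (h k).norm_mul_norm_le
      _ = ‖z k - x‖⁻¹ • t k := by rw [smul_eq_mul, div_eq_inv_mul]
      _ ≤ M := hM (mem_range_self k)

lemma mem_limNormal
    (h : ∀ k, IsApproxStationary F Γ x d ξ₀ (ε k) (t k) (z k) (lam k) (δ k) (ξ k))
    (hε : Tendsto ε atTop (𝓝 0)) (hF : ContinuousAt F x) (hx : F x ∈ Γ)
    (hlam : Tendsto lam atTop (𝓝 lam₀)) : lam₀ ∈ limNormal Γ (F x) := by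
  have hpt := (hF.tendsto.comp (tendsto_point h hε)).sub (tendsto_residual h hε)
  rw [sub_zero] at hpt
  exact mem_limNormal_of_tendsto hx hpt hlam (Eventually.of_forall fun k => (h k).mem_regNormal)

lemma mem_dirLimNormal
    (h : ∀ k, IsApproxStationary F Γ x d ξ₀ (ε k) (t k) (z k) (lam k) (δ k) (ξ k))
    (hε : Tendsto ε atTop (𝓝 0)) (hU : U ∈ 𝓝 x) (hF : LipschitzOnWith K F U) (hx : F x ∈ Γ)
    (hv : Tendsto (fun s : ℝ => s⁻¹ • (F (x + s • d) - F x)) (𝓝[>] 0) (𝓝 v))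
    (hlam : Tendsto lam atTop (𝓝 lam₀)) : lam₀ ∈ dirLimNormal Γ (F x) v := by
  have ht (k : ℕ) : 0 < t k := (h k).pos
  have hvalue : Tendsto (fun k => (t k)⁻¹ • (F (z k) - δ k - F x)) atTop (𝓝 v) := by
    simpa only [← smul_sub, sub_right_comm, sub_zero] using
      (tendsto_inv_smul_sub_of_lipschitzOnWith hU hF hv ht (tendsto_scale h hε)
        (tendsto_inv_smul_sub h hε)).sub (tendsto_inv_smul_residual h hε)
  exact mem_dirLimNormal_of_tendsto hx ht (tendsto_scale h hε) hvalue hlam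
    (Eventually.of_forall fun k => (h k).mem_regNormal)

lemma exists_seq_frechetSubdiff_inner [ProperSpace E]
    (h : ∀ k, IsApproxStationary F Γ x d ξ₀ (ε k) (t k) (z k) (lam k) (δ k) (ξ k))
    (hε : Tendsto ε atTop (𝓝 0)) (hU : U ∈ 𝓝 x) (hF : LipschitzOnWith K F U)
    (hlam : Tendsto lam atTop (𝓝 lam₀)) :
    ∃ z' ξ' : ℕ → E, Tendsto (fun k => (t k)⁻¹ • (z' k - x)) atTop (𝓝 d) ∧
      Tendsto ξ' atTop (𝓝 ξ₀) ∧
      ∀ᶠ k in atTop, ξ' k ∈ frechetSubdiff (fun y => ⟪lam₀, F y⟫) (z' k) := by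
  obtain ⟨z', ξ', hz', hξ', hmem⟩ := exists_seq_frechetSubdiff_inner_of_tendsto hU hF
    (fun k => (h k).pos) (tendsto_point h hε) hlam fun k => (h k).mem_frechetSubdiff
  refine ⟨z', ξ', ?_, ?_, hmem⟩
  · simpa only [← smul_add, sub_add_sub_cancel, zero_add] using
      hz'.add (tendsto_inv_smul_sub h hε)
  · simpa only [sub_add_cancel, zero_add] using hξ'.add (tendsto_subgradient h hε)

lemma mem_limSubdiff_inner [ProperSpace E]
    (h : ∀ k, IsApproxStationary F Γ x d ξ₀ (ε k) (t k) (z k) (lam k) (δ k) (ξ k))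
    (hε : Tendsto ε atTop (𝓝 0)) (hU : U ∈ 𝓝 x) (hF : LipschitzOnWith K F U)
    (hlam : Tendsto lam atTop (𝓝 lam₀)) : ξ₀ ∈ limSubdiff (fun y => ⟪lam₀, F y⟫) x := by
  obtain ⟨z', ξ', hz', hξ', hmem⟩ := exists_seq_frechetSubdiff_inner h hε hU hF hlam
  exact mem_limSubdiff_of_tendsto (continuousAt_const.inner (hF.continuousOn.continuousAt hU))
    (tendsto_of_tendsto_inv_smul_sub (fun k => (h k).pos) (tendsto_scale h hε) hz') hξ' hmem

lemma mem_dirLimSubdiff_inner [ProperSpace E]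
    (h : ∀ k, IsApproxStationary F Γ x d ξ₀ (ε k) (t k) (z k) (lam k) (δ k) (ξ k))
    (hε : Tendsto ε atTop (𝓝 0)) (hU : U ∈ 𝓝 x) (hF : LipschitzOnWith K F U)
    (hv : Tendsto (fun s : ℝ => s⁻¹ • (F (x + s • d) - F x)) (𝓝[>] 0) (𝓝 v))
    (hlam : Tendsto lam atTop (𝓝 lam₀)) :
    ξ₀ ∈ dirLimSubdiff (fun y => ⟪lam₀, F y⟫) x d ⟪lam₀, v⟫ := by
  obtain ⟨z', ξ', hz', hξ', hmem⟩ := exists_seq_frechetSubdiff_inner h hε hU hF hlam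
  have ht (k : ℕ) : 0 < t k := (h k).pos
  have hvalue : Tendsto (fun k => (t k)⁻¹ * (⟪lam₀, F (z' k)⟫ - ⟪lam₀, F x⟫)) atTop
      (𝓝 ⟪lam₀, v⟫) := by
    simpa only [inner_smul_right, inner_sub_right] using
      (tendsto_const_nhds (x := lam₀)).inner (𝕜 := ℝ)
        (tendsto_inv_smul_sub_of_lipschitzOnWith hU hF hv ht (tendsto_scale h hε) hz')
  exact mem_dirLimSubdiff_of_tendsto ht (tendsto_scale h hε) hz' hvalue hξ' hmem

end IsApproxStationary

theorem stmt17_general {n l : ℕ} {f : Eu n → ℝ} {F : Eu n → Eu l} {F' : Eu n → Eu n → Eu l}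
    {Γ : Set (Eu l)} {K : NNReal} {U : Set (Eu n)} {x d : Eu n} (hf : ContDiffAt ℝ 1 f x)
    (hU : U ∈ 𝓝 x) (hF : LipschitzOnWith K F U) (hΓ : IsClosed Γ)
    (hmin : IsLocalMinOn f (F ⁻¹' Γ) x) (hd : d ∈ implCritCone f F Γ x) (hd1 : ‖d‖ = 1) :
    (AMRegDir F Γ x d → MStat f F Γ x) ∧
    (Tendsto (fun t : ℝ => t⁻¹ • (F (x + t • d) - F x)) (𝓝[>] 0) (𝓝 (F' x d)) →
      StrongAMRegDir F F' Γ x d → MStatDir f F F' Γ x d) := by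
  have hx : F x ∈ Γ := hd.2.1
  let ε (k : ℕ) : ℝ := 1 / ((k + 1 : ℕ) + 1)
  have hε0 (k : ℕ) : 0 < ε k := Nat.one_div_pos_of_nat
  have hε1 (k : ℕ) : ε k < 1 := (div_lt_one (by positivity)).2 (by push_cast; linarith)
  have hε : Tendsto ε atTop (𝓝 0) :=
    (tendsto_add_atTop_iff_nat 1).2 tendsto_one_div_add_atTop_nhds_zero_nat
  choose t z lam δ ξ h using fun k =>
    exists_isApproxStationary hf hU hF hΓ hmin hd.1 hd.2 (hε0 k) (hε1 k).le
  rcases tendsto_norm_atTop_or_exists_subseq_tendsto lam with hlam | ⟨lam₀, σ, hσ, hlam⟩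
  · have hdata := IsApproxStationary.amRegDirData h hε hε1 hd1 hlam
    exact ⟨fun hreg => (hreg _ _ _ _ _ hdata).imp fun _ => And.symm,
      fun _ hreg => (hreg _ _ _ _ _ hdata).imp fun _ => And.symm⟩
  · have hεσ := hε.comp hσ.tendsto_atTop
    exact ⟨fun _ => ⟨lam₀,
        IsApproxStationary.mem_limSubdiff_inner (fun k => h (σ k)) hεσ hU hF hlam,
        IsApproxStationary.mem_limNormal (fun k => h (σ k)) hεσ
          (hF.continuousOn.continuousAt hU) hx hlam⟩,
      fun hv _ => ⟨lam₀,
        IsApproxStationary.mem_dirLimSubdiff_inner (fun k => h (σ k)) hεσ hU hF hv hlam,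
        IsApproxStationary.mem_dirLimNormal (fun k => h (σ k)) hεσ hU hF hx hv hlam⟩⟩

/-- Directional AM-regularity yields M-stationarity and strong directional
AM-regularity yields directional M-stationarity of local minimizers. -/
theorem stmt17 {n l : ℕ}
    (f : Eu n → ℝ) (hf : ContDiff ℝ 1 f)
    (F : Eu n → Eu l) (F' : Eu n → Eu n → Eu l)
    (hLip : LocallyLipschitz F) (hF' : IsDirDeriv F F')
    (Γ : Set (Eu l)) (hΓne : Γ.Nonempty) (hΓcl : IsClosed Γ)
    (x : Eu n) (hfeas : F x ∈ Γ) (hmin : IsLocalMinOn f (F ⁻¹' Γ) x)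
    (d : Eu n) (hd : d ∈ implCritCone f F Γ x) (hd1 : ‖d‖ = 1) :
    (AMRegDir F Γ x d → MStat f F Γ x) ∧
    (StrongAMRegDir F F' Γ x d → MStatDir f F F' Γ x d) := by
  obtain ⟨K, U, hU, hF⟩ := hLip x
  exact (stmt17_general hf.contDiffAt hU hF hΓcl hmin hd hd1).imp_right fun h => h (hF' x d)

end
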